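/- Let τ = τ_n → 0 and suppose k_M < 1 and f_τ ↑ ∞ as τ → 0. Then for any fixed L > 0 and any index i in the set M = {1 ≤ i ≤ n : f_τ τ ≤ |θ_{0,i}| ≤ k_M ζ_τ}, the marginal credible interval fails to cover: P_{θ_0}( θ_{0,i} ∉ Ĉ_ni(L, τ) ) → 1. -/

import Mathlib

open MeasureTheory ProbabilityTheory Filter Set Real Asymptotics
open scoped ENNReal NNReal BigOperators

noncomputable section

/-- Standard normal density `φ`. -/
def phiN (x : ℝ) : ℝ := (Real.sqrt (2 * Real.pi))⁻¹ * Real.exp (-(x ^ 2) / 2)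

/-- Horseshoe prior density with global parameter `τ`. -/
def gHS (τ θ : ℝ) : ℝ :=
  ∫ l in Set.Ioi (0 : ℝ), phiN (θ / (l * τ)) / (l * τ) * (2 / (Real.pi * (1 + l ^ 2)))

/-- Unnormalised marginal posterior density of `θᵢ` given `Yᵢ = y` (parameter `τ`). -/
def postDens (τ y θ : ℝ) : ℝ := phiN (y - θ) * gHS τ θ

/-- Bayesian marginal density `ψ_τ(y)` of one observation. -/
def margDens (τ y : ℝ) : ℝ := ∫ θ, postDens τ y θ

/-- Marginal posterior probability `Π(θᵢ ∈ A | Yᵢ = y, τ)`. -/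
def postProb (τ y : ℝ) (A : Set ℝ) : ℝ := (∫ θ in A, postDens τ y θ) / margDens τ y

/-- Marginal posterior mean `θ̂ᵢ(τ)`. -/
def postMean (τ y : ℝ) : ℝ := (∫ θ, θ * postDens τ y θ) / margDens τ y

/-- Marginal posterior variance. -/
def postVar (τ y : ℝ) : ℝ :=
  (∫ θ, (θ - postMean τ y) ^ 2 * postDens τ y θ) / margDens τ y

/-- Marginal posterior fourth central moment. -/
def postMom4 (τ y : ℝ) : ℝ :=
  (∫ θ, (θ - postMean τ y) ^ 4 * postDens τ y θ) / margDens τ y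

/-- `ζ_τ = √(2 log (1/τ))`. -/
def zet (τ : ℝ) : ℝ := Real.sqrt (2 * Real.log (1 / τ))

/-- `τ_n(p) = (p/n) √(log (n/p))`. -/
def tauOpt (n p : ℕ) : ℝ := ((p : ℝ) / (n : ℝ)) * Real.sqrt (Real.log ((n : ℝ) / (p : ℝ)))

/-- The law `P_{θ₀}` of `Y^n`. -/
def Pdata {n : ℕ} (θ₀ : Fin n → ℝ) : Measure (Fin n → ℝ) :=
  Measure.pi fun i => gaussianReal (θ₀ i) 1

/-- The standard normal upper `α`-quantile `z_α`. -/
def zquant (α : ℝ) : ℝ := sInf {z : ℝ | ((gaussianReal 0 1) (Set.Ioi z)).toReal ≤ α}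

/-- Nearly black vectors `ℓ₀[p]`. -/
def nearlyBlack (n p : ℕ) : Set (Fin n → ℝ) :=
  {θ | ({i | θ i ≠ 0} : Set (Fin n)).ncard ≤ p}

/-- Unnormalised posterior density of the full vector `θ` given `Y^n = y` and `τ`. -/
def fullDens {n : ℕ} (τ : ℝ) (y θ : Fin n → ℝ) : ℝ := ∏ i, postDens τ (y i) (θ i)

/-- Posterior probability `Π(θ ∈ A | Y^n = y, τ)` of a set of vectors. -/
def fullPostProb {n : ℕ} (τ : ℝ) (y : Fin n → ℝ) (A : Set (Fin n → ℝ)) : ℝ :=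
  (∫ θ in A, fullDens τ y θ) / ∫ θ, fullDens τ y θ

/-- Posterior mean of the full vector (coordinatewise, by conditional independence). -/
def fullPostMean {n : ℕ} (τ : ℝ) (y : Fin n → ℝ) : Fin n → ℝ := fun i => postMean τ (y i)

/-- Euclidean distance on `ℝⁿ`. -/
def l2dist {n : ℕ} (a b : Fin n → ℝ) : ℝ := Real.sqrt (∑ i, (a i - b i) ^ 2)

/-- Marginal likelihood of `τ`. -/
def lik {n : ℕ} (τ : ℝ) (y : Fin n → ℝ) : ℝ := ∏ i, margDens τ (y i)

/-- Unnormalised hierarchical posterior weight of `τ` given the data. -/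
def hierWeight {n : ℕ} (pr : ℝ → ℝ) (y : Fin n → ℝ) (τ : ℝ) : ℝ := pr τ * lik τ y

/-- Hierarchical posterior distribution of `τ`. -/
def hierTauProb {n : ℕ} (pr : ℝ → ℝ) (y : Fin n → ℝ) (A : Set ℝ) : ℝ :=
  (∫ τ in A, hierWeight pr y τ) / ∫ τ, hierWeight pr y τ

/-- Hierarchical marginal posterior probability for coordinate `i`. -/
def hierPostProb {n : ℕ} (pr : ℝ → ℝ) (y : Fin n → ℝ) (i : Fin n) (A : Set ℝ) : ℝ :=
  (∫ τ, hierWeight pr y τ * postProb τ (y i) A) / ∫ τ, hierWeight pr y τ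

/-- Hierarchical marginal posterior mean for coordinate `i`. -/
def hierPostMean {n : ℕ} (pr : ℝ → ℝ) (y : Fin n → ℝ) (i : Fin n) : ℝ :=
  (∫ τ, hierWeight pr y τ * postMean τ (y i)) / ∫ τ, hierWeight pr y τ

/-- Hierarchical posterior probability of a set of vectors. -/
def hierFullPostProb {n : ℕ} (pr : ℝ → ℝ) (y : Fin n → ℝ) (A : Set (Fin n → ℝ)) : ℝ :=
  (∫ τ, pr τ * ∫ θ in A, fullDens τ y θ) / ∫ τ, pr τ * ∫ θ, fullDens τ y θ

/-- Hierarchical posterior mean vector. -/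
def hierFullPostMean {n : ℕ} (pr : ℝ → ℝ) (y : Fin n → ℝ) : Fin n → ℝ :=
  fun i => hierPostMean pr y i

/-- The functions `I_k`. -/
def Ik (τ k y : ℝ) : ℝ :=
  ∫ z in Set.Ioc (0 : ℝ) 1, z ^ k * (τ ^ 2 + (1 - τ ^ 2) * z)⁻¹ * Real.exp (y ^ 2 * z / 2)

/-- The function `m_τ`. -/
def mHS (τ y : ℝ) : ℝ :=
  y ^ 2 * ((Ik τ (1 / 2) y - Ik τ (3 / 2) y) / Ik τ (-(1 / 2)) y) -
    Ik τ (1 / 2) y / Ik τ (-(1 / 2)) y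

/-- The excessive-bias restriction with witness `q`. -/
def EBRwith (n : ℕ) (A Cs C : ℝ) (θ : Fin n → ℝ) (q : ℕ) : Prop :=
  1 ≤ q ∧
    (∑ i, if |θ i| < A * Real.sqrt (2 * Real.log ((n : ℝ) / (q : ℝ))) then (θ i) ^ 2 else 0)
        ≤ C * (q : ℝ) * Real.log ((n : ℝ) / (q : ℝ)) ∧
    (q : ℝ) / Cs ≤
      (({i | A * Real.sqrt (2 * Real.log ((n : ℝ) / (q : ℝ))) ≤ |θ i|} : Set (Fin n)).ncard : ℝ)

/-- The excessive-bias restriction. -/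
def EBR (n : ℕ) (A Cs C : ℝ) (θ : Fin n → ℝ) : Prop := ∃ q, EBRwith n A Cs C θ q

/-- The class `Θ[p]`. -/
def ThetaClass (n p : ℕ) (A Cs C : ℝ) : Set (Fin n → ℝ) :=
  {θ | θ ∈ nearlyBlack n p ∧ EBR n A Cs C θ}

/-- Smallest witness `q` in the excessive-bias restriction. -/
def qmin (n : ℕ) (A Cs C : ℝ) (θ : Fin n → ℝ) : ℕ := sInf {q | EBRwith n A Cs C θ q}

/-- `p̃(θ₀)`: the number of coordinates above threshold for the smallest witness `q`. -/
def ptilde (n : ℕ) (A Cs C : ℝ) (θ : Fin n → ℝ) : ℕ :=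
  ({i | A * Real.sqrt (2 * Real.log ((n : ℝ) / (qmin n A Cs C θ : ℝ))) ≤ |θ i|} :
    Set (Fin n)).ncard

/-!
The prior density `g = gHS τ` is even, integrates to one and satisfies `g θ ≤ τ / θ ^ 2`. Write `m`
for the marginal density of the observation `y`. By evenness, averaging over `θ` and `-θ`,

* `m ≥ c * exp (-y ^ 2 / 2)`, because `φ (y - θ) + φ (y + θ) ≥ 2 * exp (-y ^ 2 / 2) * φ θ`;
* the posterior mean is `O(τ / m)`, because `φ (y - θ) - φ (y + θ) = O(|θ|)`.

The tail of `g` beyond `3 * τ / (α * m)` carries posterior mass less than `α`, so the radius of the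
credible interval is `O(τ / m)` as well. Hence bias and radius are both at most a multiple of
`τ * exp (y ^ 2 / 2)`, and this is `o(|θ₀|)` when `y` is within bounded distance of `θ₀`, `|θ₀| / τ`
tends to infinity and `|θ₀| ≤ k * ζ_τ` with `k < 1`.
-/

section Gaussian

lemma exp_neg_le_two_div_one_add_sq {u : ℝ} (hu : 0 ≤ u) : exp (-u) ≤ 2 / (1 + u) ^ 2 := by
  rw [Real.exp_neg, ← one_div, div_le_div_iff₀ (exp_pos u) (by positivity)]
  nlinarith [quadratic_le_exp_of_nonneg hu]

lemma phiN_pos (x : ℝ) : 0 < phiN x := by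
  unfold phiN
  positivity

lemma phiN_neg (x : ℝ) : phiN (-x) = phiN x := by
  simp only [phiN, neg_sq]

lemma phiN_le_half_exp (x : ℝ) : phiN x ≤ exp (-(x ^ 2) / 2) / 2 := by
  have hsqrt : 2 ≤ √(2 * π) := Real.le_sqrt_of_sq_le (by linarith [pi_gt_three])
  calc phiN x ≤ 2⁻¹ * exp (-(x ^ 2) / 2) :=
        mul_le_mul_of_nonneg_right (inv_anti₀ two_pos hsqrt) (exp_pos _).le
    _ = exp (-(x ^ 2) / 2) / 2 := by ring

lemma phiN_le_one (x : ℝ) : phiN x ≤ 1 := by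
  have hexp : exp (-(x ^ 2) / 2) ≤ 1 := exp_le_one_iff.2 (by linarith [sq_nonneg x])
  linarith [phiN_le_half_exp x]

lemma phiN_le_phiN_of_abs_le {a b : ℝ} (h : |a| ≤ |b|) : phiN b ≤ phiN a := by
  have hsq : a ^ 2 ≤ b ^ 2 := sq_le_sq.2 h
  unfold phiN
  gcongr

lemma phiN_eq_gaussianPDFReal : phiN = gaussianPDFReal 0 1 := by
  ext x
  simp only [phiN, gaussianPDFReal, NNReal.coe_one, mul_one, sub_zero]

lemma continuous_phiN : Continuous phiN := by
  unfold phiN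
  fun_prop

lemma integrable_phiN : Integrable phiN :=
  phiN_eq_gaussianPDFReal ▸ integrable_gaussianPDFReal 0 1

lemma integral_phiN : ∫ x, phiN x = 1 :=
  phiN_eq_gaussianPDFReal ▸ integral_gaussianPDFReal_eq_one 0 one_ne_zero

lemma hasDerivAt_phiN (x : ℝ) : HasDerivAt phiN (-(x * phiN x)) x := by
  have h := (((hasDerivAt_pow 2 x).fun_neg.div_const 2).exp).const_mul (√(2 * π))⁻¹
  refine h.congr_deriv ?_
  simp only [phiN]
  ring

lemma abs_mul_phiN_le_one (x : ℝ) : |x| * phiN x ≤ 1 := by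
  have hx : |x| ≤ exp (x ^ 2 / 2) := by
    nlinarith [add_one_le_exp (x ^ 2 / 2), sq_abs x, sq_nonneg (|x| - 1)]
  calc |x| * phiN x ≤ exp (x ^ 2 / 2) * (exp (-(x ^ 2) / 2) / 2) := by
        gcongr
        exacts [(phiN_pos x).le, phiN_le_half_exp x]
    _ = 1 / 2 := by
        rw [← mul_div_assoc, ← Real.exp_add, neg_div, add_neg_cancel, Real.exp_zero]
    _ ≤ 1 := by norm_num

lemma abs_phiN_sub_le (a b : ℝ) : |phiN a - phiN b| ≤ |a - b| := by
  have hderiv (x : ℝ) : ‖-(x * phiN x)‖ ≤ 1 := by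
    rw [norm_neg, Real.norm_eq_abs, abs_mul, abs_of_pos (phiN_pos x)]
    exact abs_mul_phiN_le_one x
  simpa only [Real.norm_eq_abs, one_mul] using
    convex_univ.norm_image_sub_le_of_norm_hasDerivWithin_le
      (fun x _ => (hasDerivAt_phiN x).hasDerivWithinAt) (fun x _ => hderiv x)
      (mem_univ b) (mem_univ a)

/-- A majorant of the difference quotient `|φ (y - θ) - φ (y + θ)| / |θ|` that is integrable in `θ`
with integral not depending on `y`: on `[-1, 1]` the first term dominates by Lipschitz continuity,
off `[-1, 1]` the other two do by the triangle inequality. -/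
def reflectionMajorant (y θ : ℝ) : ℝ :=
  (Icc (-1) 1).indicator (fun _ => 2) θ + (phiN (y - θ) + phiN (y + θ))

lemma reflectionMajorant_nonneg (y θ : ℝ) : 0 ≤ reflectionMajorant y θ :=
  add_nonneg (indicator_nonneg (fun _ _ => zero_le_two) θ)
    (add_pos (phiN_pos _) (phiN_pos _)).le

lemma abs_phiN_sub_sub_phiN_add_le (y θ : ℝ) :
    |phiN (y - θ) - phiN (y + θ)| ≤ |θ| * reflectionMajorant y θ := by
  have hsub := phiN_pos (y - θ)
  have hadd := phiN_pos (y + θ)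
  unfold reflectionMajorant
  by_cases hθ : θ ∈ Icc (-1) 1
  · have hlip := abs_phiN_sub_le (y - θ) (y + θ)
    rw [show y - θ - (y + θ) = -(2 * θ) by ring, abs_neg, abs_mul, abs_two] at hlip
    rw [indicator_of_mem hθ]
    nlinarith [mul_nonneg (abs_nonneg θ) (add_pos hsub hadd).le]
  · have h1θ : 1 ≤ |θ| := (not_le.1 fun h => hθ (abs_le.1 h)).le
    rw [indicator_of_notMem hθ, zero_add]
    calc |phiN (y - θ) - phiN (y + θ)| ≤ phiN (y - θ) + phiN (y + θ) := by
          simpa only [abs_of_pos hsub, abs_of_pos hadd] using abs_sub (phiN (y - θ)) (phiN (y + θ))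
      _ ≤ |θ| * (phiN (y - θ) + phiN (y + θ)) := le_mul_of_one_le_left (by positivity) h1θ

lemma integrable_indicator_Icc_two : Integrable ((Icc (-1 : ℝ) 1).indicator fun _ => (2 : ℝ)) :=
  (integrable_indicator_iff measurableSet_Icc).2 (integrableOn_const measure_Icc_lt_top.ne)

lemma integrable_reflectionMajorant (y : ℝ) : Integrable (reflectionMajorant y) :=
  integrable_indicator_Icc_two.add
    ((integrable_phiN.comp_sub_left y).add (integrable_phiN.comp_add_left y))

lemma integral_reflectionMajorant (y : ℝ) : ∫ θ, reflectionMajorant y θ = 6 := by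
  have hsub := integrable_phiN.comp_sub_left y
  have hadd := integrable_phiN.comp_add_left y
  simp only [reflectionMajorant]
  rw [integral_add integrable_indicator_Icc_two (by exact hsub.add hadd), integral_add hsub hadd,
    integral_sub_left_eq_self phiN, integral_add_left_eq_self phiN, integral_phiN,
    integral_indicator measurableSet_Icc, setIntegral_const, Real.volume_real_Icc]
  norm_num

lemma two_mul_exp_mul_phiN_le (y θ : ℝ) :
    2 * (exp (-(y ^ 2) / 2) * phiN θ) ≤ phiN (y - θ) + phiN (y + θ) := by
  have hshift (s : ℝ) (hs : s ^ 2 = θ ^ 2) :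
      phiN (y + s) = exp (-(y ^ 2) / 2) * phiN θ * exp (-(y * s)) := by
    simp only [phiN, ← hs]
    rw [mul_left_comm, mul_assoc, mul_assoc, ← Real.exp_add, ← Real.exp_add]
    ring_nf
  have hcosh := one_le_cosh (y * θ)
  have hpos : 0 ≤ exp (-(y ^ 2) / 2) * phiN θ := mul_nonneg (exp_pos _).le (phiN_pos θ).le
  calc 2 * (exp (-(y ^ 2) / 2) * phiN θ)
      ≤ 2 * (exp (-(y ^ 2) / 2) * phiN θ * cosh (y * θ)) :=
        mul_le_mul_of_nonneg_left (le_mul_of_one_le_right hpos hcosh) zero_le_two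
    _ = phiN (y - θ) + phiN (y + θ) := by
        rw [sub_eq_add_neg, hshift (-θ) (neg_sq θ), hshift θ rfl, Real.cosh_eq]
        ring_nf

end Gaussian

section Integration

lemma two_mul_integral_eq_integral_add_neg {f : ℝ → ℝ} (hf : Integrable f) :
    2 * ∫ x, f x = ∫ x, (f x + f (-x)) := by
  rw [integral_add hf hf.comp_neg, integral_neg_eq_self f, two_mul]

lemma setIntegral_lt_abs_of_even {g : ℝ → ℝ} (hg : g.Even) {t : ℝ} (ht : 0 ≤ t) :
    ∫ x in {x | t < |x|}, g x = 2 * ∫ x in Ioi t, g x := by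
  have habs (x : ℝ) : g |x| = g x := by
    rcases abs_choice x with h | h <;> rw [h]
    exact hg x
  have hset : {x | t < |x|}.indicator g = fun x => (Ioi t).indicator g |x| := by
    ext x
    simp only [indicator_apply, mem_ofPred_eq, mem_Ioi, habs]
  rw [← integral_indicator (measurableSet_lt measurable_const measurable_abs), hset,
    integral_comp_abs, setIntegral_indicator measurableSet_Ioi,
    inter_eq_right.2 (Ioi_subset_Ioi ht)]

lemma integral_Ioi_div_sq_add_sq {b : ℝ} (hb : 0 < b) :
    IntegrableOn (fun l : ℝ => l / (l ^ 2 + b) ^ 2) (Ioi 0) ∧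
      ∫ l in Ioi (0 : ℝ), l / (l ^ 2 + b) ^ 2 = 1 / (2 * b) := by
  have hderiv : ∀ l ∈ Ici (0 : ℝ),
      HasDerivAt (fun l : ℝ => -(l ^ 2 + b)⁻¹ / 2) (l / (l ^ 2 + b) ^ 2) l := fun l _ => by
    refine (((hasDerivAt_pow 2 l).add_const b).inv (by positivity)).fun_neg.div_const 2
      |>.congr_deriv ?_
    push_cast
    ring
  have hnonneg : ∀ l ∈ Ioi (0 : ℝ), 0 ≤ l / (l ^ 2 + b) ^ 2 := fun l (hl : 0 < l) => by positivity
  have hlim : Tendsto (fun l : ℝ => -(l ^ 2 + b)⁻¹ / 2) atTop (nhds (-0 / 2)) :=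
    (tendsto_inv_atTop_zero.comp (tendsto_atTop_add_const_right _ b
      (tendsto_pow_atTop two_ne_zero))).neg.div_const 2
  refine ⟨integrableOn_Ioi_deriv_of_nonneg' hderiv hnonneg hlim, ?_⟩
  rw [integral_Ioi_of_hasDerivAt_of_nonneg' hderiv hnonneg hlim]
  field_simp
  norm_num

lemma integral_Ioi_halfCauchy : ∫ l in Ioi (0 : ℝ), 2 / (π * (1 + l ^ 2)) = 1 := by
  have hfun (l : ℝ) : 2 / (π * (1 + l ^ 2)) = 2 / π * (1 + l ^ 2)⁻¹ := by
    rw [div_mul_eq_div_div, div_eq_mul_inv (2 / π)]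
  simp_rw [hfun]
  rw [integral_const_mul, integral_Ioi_inv_one_add_sq, arctan_zero]
  field_simp
  norm_num

lemma radius_lt_of_setIntegral_le {μ : Measure ℝ} {f : ℝ → ℝ} (hf : Integrable f μ)
    (hf0 : ∀ x, 0 ≤ f x) {c r t α : ℝ} (htail : ∫ x in {x | t < |x|}, f x ∂μ < α * ∫ x, f x ∂μ)
    (hball : ∫ x in {x | |x - c| ≤ r}, f x ∂μ ≤ (1 - α) * ∫ x, f x ∂μ) : r < t + |c| := by
  by_contra! hr
  have hsub : {x : ℝ | t < |x|}ᶜ ⊆ {x | |x - c| ≤ r} := fun x hx => by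
    rw [mem_compl_iff, mem_ofPred_eq, not_lt] at hx
    calc |x - c| ≤ |x| + |c| := abs_sub x c
      _ ≤ r := by linarith
  have hmono : ∫ x in {x : ℝ | t < |x|}ᶜ, f x ∂μ ≤ ∫ x in {x | |x - c| ≤ r}, f x ∂μ :=
    setIntegral_mono_set hf.integrableOn (ae_of_all _ hf0) hsub.eventuallyLE
  have hsplit := integral_add_compl (measurableSet_lt measurable_const measurable_abs
    : MeasurableSet {x : ℝ | t < |x|}) hf
  linarith

end Integration

/-- An even probability density `g` with the tail bound `g θ ≤ A / θ ^ 2` of a Cauchy density of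
scale `A`, written without division. It isolates what the argument needs from the horseshoe prior,
for which `A = τ`. -/
structure IsEvenCauchyTailDensity (g : ℝ → ℝ) (A : ℝ) : Prop where
  even : g.Even
  nonneg : ∀ θ, 0 ≤ g θ
  integral_eq_one : ∫ θ, g θ = 1
  sq_mul_le : ∀ θ, θ ^ 2 * g θ ≤ A

namespace IsEvenCauchyTailDensity

variable {g : ℝ → ℝ} {A : ℝ} (hg : IsEvenCauchyTailDensity g A)

include hg

lemma integrable : Integrable g := integrable_of_integral_eq_one hg.integral_eq_one

lemma phiN_mul_le (z θ : ℝ) : phiN z * g θ ≤ g θ :=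
  mul_le_of_le_one_left (hg.nonneg θ) (phiN_le_one z)

lemma phiN_mul_nonneg (z θ : ℝ) : 0 ≤ phiN z * g θ := mul_nonneg (phiN_pos z).le (hg.nonneg θ)

lemma integrable_phiN_comp_mul {u : ℝ → ℝ} (hu : Continuous u) :
    Integrable fun θ => phiN (u θ) * g θ := by
  refine hg.integrable.mono'
    ((continuous_phiN.comp hu).aestronglyMeasurable.mul hg.integrable.1)
    (ae_of_all _ fun θ => ?_)
  rw [Real.norm_of_nonneg (hg.phiN_mul_nonneg _ θ)]
  exact hg.phiN_mul_le _ θ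

lemma integrable_phiN_mul (y : ℝ) : Integrable fun θ => phiN (y - θ) * g θ :=
  hg.integrable_phiN_comp_mul (continuous_const.sub continuous_id)

lemma integrable_mul_phiN_mul (y : ℝ) : Integrable fun θ => θ * (phiN (y - θ) * g θ) := by
  refine (hg.integrable.add ((integrable_phiN.comp_sub_left y).const_mul A)).mono'
    (continuous_id.aestronglyMeasurable.mul (hg.integrable_phiN_mul y).1) (ae_of_all _ fun θ => ?_)
  have hφ := phiN_pos (y - θ)
  have hφg := hg.phiN_mul_nonneg (y - θ) θ
  rw [norm_mul, Real.norm_of_nonneg hφg, Real.norm_eq_abs]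
  calc |θ| * (phiN (y - θ) * g θ) ≤ (1 + θ ^ 2) * (phiN (y - θ) * g θ) := by
        gcongr
        nlinarith [sq_abs θ, sq_nonneg (|θ| - 1)]
    _ = phiN (y - θ) * g θ + θ ^ 2 * g θ * phiN (y - θ) := by ring
    _ ≤ g θ + A * phiN (y - θ) := by
        gcongr
        exacts [hg.phiN_mul_le _ θ, hg.sq_mul_le θ]

lemma setIntegral_lt_abs_le {t : ℝ} (ht : 0 < t) : ∫ θ in {θ | t < |θ|}, g θ ≤ 2 * A / t := by
  have hle : ∀ θ ∈ Ioi t, g θ ≤ A * θ ^ (-2 : ℝ) := fun θ hθ => by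
    have hθ0 : 0 < θ := ht.trans hθ
    rw [Real.rpow_neg hθ0.le, Real.rpow_two, ← div_eq_mul_inv, le_div_iff₀ (by positivity),
      mul_comm]
    exact hg.sq_mul_le θ
  have hmono : ∫ θ in Ioi t, g θ ≤ ∫ θ in Ioi t, A * θ ^ (-2 : ℝ) :=
    setIntegral_mono_on hg.integrable.integrableOn
      ((integrableOn_Ioi_rpow_of_lt (by norm_num) ht).const_mul A) measurableSet_Ioi hle
  calc ∫ θ in {θ | t < |θ|}, g θ = 2 * ∫ θ in Ioi t, g θ := setIntegral_lt_abs_of_even hg.even ht.le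
    _ ≤ 2 * ∫ θ in Ioi t, A * θ ^ (-2 : ℝ) := mul_le_mul_of_nonneg_left hmono zero_le_two
    _ = 2 * A / t := by
        rw [integral_const_mul, integral_Ioi_rpow_of_lt (by norm_num) ht,
          show (-2 : ℝ) + 1 = -1 by norm_num, Real.rpow_neg_one]
        ring

lemma setIntegral_lt_abs_phiN_mul_le (y : ℝ) {t : ℝ} (ht : 0 < t) :
    ∫ θ in {θ | t < |θ|}, phiN (y - θ) * g θ ≤ 2 * A / t :=
  (setIntegral_mono (hg.integrable_phiN_mul y).integrableOn hg.integrable.integrableOn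
    fun θ => hg.phiN_mul_le _ θ).trans (hg.setIntegral_lt_abs_le ht)

-- Pairing `θ` with `-θ` gains a factor `θ`, without which the bound would be of order
-- `A * log (1 / A)`.
lemma abs_integral_mul_phiN_mul_le (y : ℝ) : |∫ θ, θ * (phiN (y - θ) * g θ)| ≤ 3 * A := by
  have hpair (θ : ℝ) : ‖θ * (phiN (y - θ) * g θ) + -θ * (phiN (y - -θ) * g (-θ))‖ ≤
      A * reflectionMajorant y θ := by
    have hgθ := hg.nonneg θ
    calc ‖θ * (phiN (y - θ) * g θ) + -θ * (phiN (y - -θ) * g (-θ))‖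
        = ‖θ * g θ * (phiN (y - θ) - phiN (y + θ))‖ := by
          rw [hg.even θ, sub_neg_eq_add]
          ring_nf
      _ = |θ| * g θ * |phiN (y - θ) - phiN (y + θ)| := by
          rw [norm_mul, norm_mul, Real.norm_of_nonneg hgθ, Real.norm_eq_abs, Real.norm_eq_abs]
      _ ≤ |θ| * g θ * (|θ| * reflectionMajorant y θ) := by
          gcongr
          exact abs_phiN_sub_sub_phiN_add_le y θ
      _ = θ ^ 2 * g θ * reflectionMajorant y θ := by
          rw [← sq_abs θ]
          ring
      _ ≤ A * reflectionMajorant y θ :=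
          mul_le_mul_of_nonneg_right (hg.sq_mul_le θ) (reflectionMajorant_nonneg y θ)
  have habs := norm_integral_le_of_norm_le ((integrable_reflectionMajorant y).const_mul A)
    (ae_of_all _ hpair)
  rw [← two_mul_integral_eq_integral_add_neg (hg.integrable_mul_phiN_mul y), integral_const_mul,
    integral_reflectionMajorant, Real.norm_eq_abs, abs_mul, abs_two] at habs
  linarith

lemma phiN_one_mul_le_integral_phiN_mul : phiN 1 * (1 - 2 * A) ≤ ∫ θ, phiN θ * g θ := by
  have hint : Integrable fun θ => phiN θ * g θ := hg.integrable_phiN_comp_mul continuous_id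
  have hmeas : MeasurableSet {θ : ℝ | 1 < |θ|} := measurableSet_lt measurable_const measurable_abs
  have hmass : 1 - 2 * A ≤ ∫ θ in {θ : ℝ | 1 < |θ|}ᶜ, g θ := by
    have htail := hg.setIntegral_lt_abs_le one_pos
    have hsplit := integral_add_compl hmeas hg.integrable
    rw [hg.integral_eq_one] at hsplit
    linarith
  calc phiN 1 * (1 - 2 * A) ≤ phiN 1 * ∫ θ in {θ : ℝ | 1 < |θ|}ᶜ, g θ := by
        gcongr
        exact (phiN_pos 1).le
    _ = ∫ θ in {θ : ℝ | 1 < |θ|}ᶜ, phiN 1 * g θ := (integral_const_mul _ _).symm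
    _ ≤ ∫ θ in {θ : ℝ | 1 < |θ|}ᶜ, phiN θ * g θ := by
        refine setIntegral_mono_on (hg.integrable.const_mul _).integrableOn hint.integrableOn
          hmeas.compl fun θ hθ => mul_le_mul_of_nonneg_right ?_ (hg.nonneg θ)
        rw [mem_compl_iff, mem_ofPred_eq, not_lt] at hθ
        exact phiN_le_phiN_of_abs_le (hθ.trans_eq abs_one.symm)
    _ ≤ ∫ θ, phiN θ * g θ :=
        setIntegral_le_integral hint (ae_of_all _ fun θ => hg.phiN_mul_nonneg θ θ)

lemma exp_mul_le_integral_phiN_sub_mul (y : ℝ) :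
    exp (-(y ^ 2) / 2) * (phiN 1 * (1 - 2 * A)) ≤ ∫ θ, phiN (y - θ) * g θ := by
  have hint : Integrable fun θ => phiN θ * g θ := hg.integrable_phiN_comp_mul continuous_id
  have hpair : 2 * (exp (-(y ^ 2) / 2) * ∫ θ, phiN θ * g θ) ≤ 2 * ∫ θ, phiN (y - θ) * g θ := by
    rw [two_mul_integral_eq_integral_add_neg (hg.integrable_phiN_mul y), ← integral_const_mul,
      ← integral_const_mul]
    refine integral_mono ((hint.const_mul _).const_mul _)
      ((hg.integrable_phiN_mul y).add (hg.integrable_phiN_mul y).comp_neg) fun θ => ?_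
    simp only [hg.even θ, sub_neg_eq_add]
    nlinarith [mul_le_mul_of_nonneg_right (two_mul_exp_mul_phiN_le y θ) (hg.nonneg θ)]
  calc exp (-(y ^ 2) / 2) * (phiN 1 * (1 - 2 * A))
      ≤ exp (-(y ^ 2) / 2) * ∫ θ, phiN θ * g θ := by
        gcongr
        exact hg.phiN_one_mul_le_integral_phiN_mul
    _ ≤ ∫ θ, phiN (y - θ) * g θ := by linarith

end IsEvenCauchyTailDensity

section Horseshoe

variable {τ : ℝ}

/-- The joint prior density of the half-Cauchy local scale `λ = l` and of `θ`, where
`θ ∣ λ ∼ N(0, λ ^ 2 τ ^ 2)`; the horseshoe density `gHS τ` is its `θ`-marginal. -/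
def horseshoeJoint (τ l θ : ℝ) : ℝ := phiN (θ / (l * τ)) / (l * τ) * (2 / (π * (1 + l ^ 2)))

lemma horseshoeJoint_nonneg (hτ : 0 < τ) {l : ℝ} (hl : 0 < l) (θ : ℝ) :
    0 ≤ horseshoeJoint τ l θ := by
  have := phiN_pos (θ / (l * τ))
  unfold horseshoeJoint
  positivity

lemma integral_horseshoeJoint (hτ : 0 < τ) {l : ℝ} (hl : 0 < l) :
    ∫ θ, horseshoeJoint τ l θ = 2 / (π * (1 + l ^ 2)) := by
  have hs : 0 < l * τ := mul_pos hl hτ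
  simp only [horseshoeJoint]
  rw [integral_mul_const, integral_div, Measure.integral_comp_div phiN, integral_phiN,
    abs_of_pos hs, smul_eq_mul, mul_one, div_self hs.ne', one_mul]

lemma integrable_uncurry_horseshoeJoint (hτ : 0 < τ) :
    Integrable (Function.uncurry (horseshoeJoint τ)) ((volume.restrict (Ioi 0)).prod volume) := by
  have hmeas : Measurable (Function.uncurry (horseshoeJoint τ)) := by
    unfold Function.uncurry horseshoeJoint
    have := continuous_phiN.measurable
    fun_prop
  have hl : ∀ᵐ l : ℝ ∂volume.restrict (Ioi 0), 0 < l := ae_restrict_mem measurableSet_Ioi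
  refine (integrable_prod_iff hmeas.aestronglyMeasurable).2 ⟨?_, ?_⟩
  · filter_upwards [hl] with l hl
    exact ((integrable_phiN.comp_div (mul_pos hl hτ).ne').div_const (l * τ)).mul_const
      (2 / (π * (1 + l ^ 2)))
  · refine (integrable_of_integral_eq_one integral_Ioi_halfCauchy).congr ?_
    filter_upwards [hl] with l hl
    simp only [Function.uncurry_apply_pair, Real.norm_of_nonneg (horseshoeJoint_nonneg hτ hl _)]
    exact (integral_horseshoeJoint hτ hl).symm

lemma integral_gHS (hτ : 0 < τ) : ∫ θ, gHS τ θ = 1 := by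
  calc ∫ θ, gHS τ θ = ∫ l in Ioi (0 : ℝ), ∫ θ, horseshoeJoint τ l θ :=
        (integral_integral_swap (integrable_uncurry_horseshoeJoint hτ)).symm
    _ = ∫ l in Ioi (0 : ℝ), 2 / (π * (1 + l ^ 2)) :=
        setIntegral_congr_fun measurableSet_Ioi fun _ hl => integral_horseshoeJoint hτ hl
    _ = 1 := integral_Ioi_halfCauchy

lemma even_gHS (τ : ℝ) : (gHS τ).Even := fun θ => by
  simp only [gHS, neg_div, phiN_neg]

lemma gHS_nonneg (hτ : 0 < τ) (θ : ℝ) : 0 ≤ gHS τ θ :=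
  setIntegral_nonneg measurableSet_Ioi fun _ hl => horseshoeJoint_nonneg hτ hl θ

lemma horseshoeJoint_le (hτ : 0 < τ) {l : ℝ} (hl : 0 < l) (θ : ℝ) :
    horseshoeJoint τ l θ ≤ 1 / τ * (l / (l ^ 2 + θ ^ 2 / (2 * τ ^ 2)) ^ 2) := by
  have hφ : phiN (θ / (l * τ)) ≤ 1 / (1 + θ ^ 2 / (2 * l ^ 2 * τ ^ 2)) ^ 2 := by
    have hu : -(θ / (l * τ)) ^ 2 / 2 = -(θ ^ 2 / (2 * l ^ 2 * τ ^ 2)) := by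
      field_simp
    calc phiN (θ / (l * τ)) ≤ exp (-(θ ^ 2 / (2 * l ^ 2 * τ ^ 2))) / 2 :=
          hu ▸ phiN_le_half_exp _
      _ ≤ 2 / (1 + θ ^ 2 / (2 * l ^ 2 * τ ^ 2)) ^ 2 / 2 := by
          gcongr
          exact exp_neg_le_two_div_one_add_sq (by positivity)
      _ = 1 / (1 + θ ^ 2 / (2 * l ^ 2 * τ ^ 2)) ^ 2 := by ring
  have hcauchy : 2 / (π * (1 + l ^ 2)) ≤ 1 / l ^ 2 := by
    rw [div_le_div_iff₀ (by positivity) (by positivity)]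
    nlinarith [pi_gt_three, sq_nonneg l]
  calc horseshoeJoint τ l θ
      ≤ 1 / (1 + θ ^ 2 / (2 * l ^ 2 * τ ^ 2)) ^ 2 / (l * τ) * (1 / l ^ 2) := by
        unfold horseshoeJoint
        gcongr
    _ = 1 / τ * (l / (l ^ 2 + θ ^ 2 / (2 * τ ^ 2)) ^ 2) := by field_simp

lemma sq_mul_gHS_le (hτ : 0 < τ) (θ : ℝ) : θ ^ 2 * gHS τ θ ≤ τ := by
  rcases eq_or_ne θ 0 with rfl | hθ
  · simpa using hτ.le
  obtain ⟨hint, heq⟩ := integral_Ioi_div_sq_add_sq (b := θ ^ 2 / (2 * τ ^ 2)) (by positivity)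
  have hle : gHS τ θ ≤ ∫ l in Ioi (0 : ℝ), 1 / τ * (l / (l ^ 2 + θ ^ 2 / (2 * τ ^ 2)) ^ 2) := by
    refine integral_mono_of_nonneg ?_ (hint.const_mul _) ?_ <;>
      filter_upwards [ae_restrict_mem measurableSet_Ioi] with l hl
    exacts [horseshoeJoint_nonneg hτ hl θ, horseshoeJoint_le hτ hl θ]
  calc θ ^ 2 * gHS τ θ ≤ θ ^ 2 * (1 / τ * (1 / (2 * (θ ^ 2 / (2 * τ ^ 2))))) := by
        rw [integral_const_mul, heq] at hle
        gcongr
    _ = τ := by field_simp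

lemma isEvenCauchyTailDensity_gHS (hτ : 0 < τ) : IsEvenCauchyTailDensity (gHS τ) τ where
  even := even_gHS τ
  nonneg := gHS_nonneg hτ
  integral_eq_one := integral_gHS hτ
  sq_mul_le := sq_mul_gHS_le hτ

end Horseshoe

section Posterior

variable {τ : ℝ}

lemma exp_mul_le_margDens (hτ : 0 < τ) (hτ' : τ ≤ 1 / 4) (y : ℝ) :
    exp (-(y ^ 2) / 2) * (phiN 1 / 2) ≤ margDens τ y := by
  refine le_trans ?_ ((isEvenCauchyTailDensity_gHS hτ).exp_mul_le_integral_phiN_sub_mul y)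
  gcongr
  nlinarith [phiN_pos 1]

lemma abs_postMean_le (hτ : 0 < τ) {y : ℝ} (hm : 0 < margDens τ y) :
    |postMean τ y| ≤ 3 * τ / margDens τ y := by
  rw [postMean, abs_div, abs_of_pos hm]
  gcongr
  exact (isEvenCauchyTailDensity_gHS hτ).abs_integral_mul_phiN_mul_le y

lemma credible_radius_lt (hτ : 0 < τ) {y : ℝ} (hm : 0 < margDens τ y) {α r c : ℝ} (hα : 0 < α)
    (hr : postProb τ y {x | |x - c| ≤ r} ≤ 1 - α) :
    r < 3 * τ / (α * margDens τ y) + |c| := by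
  have hg := isEvenCauchyTailDensity_gHS hτ
  refine radius_lt_of_setIntegral_le (hg.integrable_phiN_mul y)
    (fun θ => hg.phiN_mul_nonneg (y - θ) θ) (α := α) ?_ ((div_le_iff₀ hm).1 hr)
  have hpos : 0 < α * margDens τ y := mul_pos hα hm
  calc ∫ θ in {θ | 3 * τ / (α * margDens τ y) < |θ|}, phiN (y - θ) * gHS τ θ
      ≤ 2 * τ / (3 * τ / (α * margDens τ y)) :=
        hg.setIntegral_lt_abs_phiN_mul_le y (by positivity)
    _ = 2 / 3 * (α * margDens τ y) := by field_simp
    _ < α * margDens τ y := by linarith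

lemma mul_radius_lt_abs_sub_postMean (hτ : 0 < τ) (hτ' : τ ≤ 1 / 4) {α L r x y : ℝ} (hα : 0 < α)
    (hL : 0 ≤ L) (hr : postProb τ y {x | |x - postMean τ y| ≤ r} ≤ 1 - α)
    (hx : τ * exp (y ^ 2 / 2) < phiN 1 / (6 * (1 + L + L / α)) * |x|) :
    L * r < |x - postMean τ y| := by
  have hφ := phiN_pos 1
  have hexp := exp_mul_le_margDens hτ hτ' y
  have hm : 0 < margDens τ y := lt_of_lt_of_le (by positivity) hexp
  have hmean := abs_postMean_le hτ hm
  have hradius : r ≤ 3 * τ / margDens τ y * (1 / α + 1) := by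
    calc r ≤ 3 * τ / (α * margDens τ y) + 3 * τ / margDens τ y :=
          (credible_radius_lt hτ hm hα hr).le.trans (by gcongr)
      _ = 3 * τ / margDens τ y * (1 / α + 1) := by field_simp
  have hscale : 3 * τ / margDens τ y * (1 + L + L / α) < |x| := by
    calc 3 * τ / margDens τ y * (1 + L + L / α)
        ≤ 3 * τ / (exp (-(y ^ 2) / 2) * (phiN 1 / 2)) * (1 + L + L / α) := by gcongr
      _ = τ * exp (y ^ 2 / 2) / (phiN 1 / (6 * (1 + L + L / α))) := by
          rw [neg_div, Real.exp_neg]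
          field_simp
          norm_num
      _ < |x| := by rwa [div_lt_iff₀' (by positivity)]
  calc L * r ≤ L * (3 * τ / margDens τ y * (1 / α + 1)) := by gcongr
    _ = 3 * τ / margDens τ y * (1 + L + L / α) - 3 * τ / margDens τ y := by ring
    _ < |x| - |postMean τ y| := by linarith
    _ ≤ |x - postMean τ y| := abs_sub_abs_le_abs_sub x _

end Posterior

section Asymptotics

lemma tendsto_zet_atTop : Tendsto zet (nhdsWithin 0 (Ioi 0)) atTop := by
  have hlog : Tendsto (fun τ : ℝ => log (1 / τ)) (nhdsWithin 0 (Ioi 0)) atTop := by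
    simp only [one_div]
    exact tendsto_log_atTop.comp tendsto_inv_nhdsGT_zero
  exact tendsto_sqrt_atTop.comp (hlog.const_mul_atTop two_pos)

lemma exp_neg_zet_sq_div_two {τ : ℝ} (hτ : 0 < τ) (hτ1 : τ ≤ 1) :
    exp (-(zet τ ^ 2) / 2) = τ := by
  have hlog : 0 ≤ 2 * log (1 / τ) := by
    have := log_nonneg ((one_le_div hτ).2 hτ1)
    positivity
  rw [zet, Real.sq_sqrt hlog, one_div, log_inv, show -(2 * -log τ) / 2 = log τ by ring, exp_log hτ]

lemma tendsto_mul_exp_sq_zet {k : ℝ} (hk : -1 < k) (hk' : k < 1) (K : ℝ) :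
    Tendsto (fun τ => τ * exp ((k * zet τ + K) ^ 2 / 2)) (nhdsWithin 0 (Ioi 0)) (nhds 0) := by
  have hexponent : Tendsto (fun z : ℝ => ((k - 1) * z + K) * ((k + 1) * z + K) / 2) atTop atBot :=
    ((tendsto_atBot_add_const_right _ K (tendsto_id.const_mul_atTop_of_neg (by linarith)))
      |>.atBot_mul_atTop₀ (tendsto_atTop_add_const_right _ K
        (tendsto_id.const_mul_atTop (by linarith)))).atBot_div_const two_pos
  refine (tendsto_exp_atBot.comp (hexponent.comp tendsto_zet_atTop)).congr' ?_
  filter_upwards [Ioc_mem_nhdsGT one_pos] with τ hτ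
  calc exp (((k - 1) * zet τ + K) * ((k + 1) * zet τ + K) / 2)
      = exp (-(zet τ ^ 2) / 2) * exp ((k * zet τ + K) ^ 2 / 2) := by
        rw [← Real.exp_add]
        ring_nf
    _ = τ * exp ((k * zet τ + K) ^ 2 / 2) := by rw [exp_neg_zet_sq_div_two hτ.1 hτ.2]

-- For `|x n| ≤ 1` the left side is `O(τ n)`, which is `o(|x n|)`; for `|x n| ≥ 1` it tends to `0`.
lemma eventually_forall_mul_exp_sq_lt {ι : Type*} {l : Filter ι} {τ x : ι → ℝ} {k D : ℝ}
    (hτ : Tendsto τ l (nhdsWithin 0 (Ioi 0))) (hk : k < 1)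
    (hx : Tendsto (fun n => |x n| / τ n) l atTop) (hxk : ∀ᶠ n in l, |x n| ≤ k * zet (τ n))
    (hD : 0 < D) (K : ℝ) :
    ∀ᶠ n in l, ∀ y, |y - x n| ≤ K → τ n * exp (y ^ 2 / 2) < D * |x n| := by
  have hlarge := (tendsto_mul_exp_sq_zet (k := max k 0) (by linarith [le_max_right k 0])
    (max_lt hk one_pos) K).comp hτ
  filter_upwards [tendsto_nhdsWithin_iff.1 hτ |>.2, hxk, hlarge.eventually_lt_const hD,
    hx.eventually_gt_atTop (exp ((1 + K) ^ 2 / 2) / D)] with n hτn hxkn hlargen hxn y hy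
  rw [mem_Ioi] at hτn
  have hy_abs : |y| ≤ |x n| + K := by linarith [abs_sub_abs_le_abs_sub y (x n)]
  have hexp_le {b : ℝ} (hb : |y| ≤ b) : τ n * exp (y ^ 2 / 2) ≤ τ n * exp (b ^ 2 / 2) := by
    have := sq_le_sq' (abs_le.1 hb).1 (abs_le.1 hb).2
    gcongr
  rcases le_total |x n| 1 with hx1 | hx1
  · calc τ n * exp (y ^ 2 / 2) ≤ τ n * exp ((1 + K) ^ 2 / 2) := hexp_le (by linarith)
      _ < D * |x n| := by
        rwa [div_lt_div_iff₀ hD hτn, mul_comm, mul_comm |x n|] at hxn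
  · have hzet : k * zet (τ n) ≤ max k 0 * zet (τ n) := by
      gcongr
      exacts [Real.sqrt_nonneg _, le_max_left k 0]
    calc τ n * exp (y ^ 2 / 2) ≤ τ n * exp ((max k 0 * zet (τ n) + K) ^ 2 / 2) :=
          hexp_le (by linarith)
      _ < D := hlargen
      _ ≤ D * |x n| := le_mul_of_one_le_right hD.le hx1

end Asymptotics

section Data

instance isProbabilityMeasure_Pdata {n : ℕ} (θ₀ : Fin n → ℝ) :
    IsProbabilityMeasure (Pdata θ₀) := by
  unfold Pdata
  infer_instance

lemma measurePreserving_eval_sub_Pdata {n : ℕ} (θ₀ : Fin n → ℝ) (i : Fin n) :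
    MeasurePreserving (fun y => y i - θ₀ i) (Pdata θ₀) (gaussianReal 0 1) := by
  have hsub : MeasurePreserving (· - θ₀ i) (gaussianReal (θ₀ i) 1) (gaussianReal 0 1) :=
    ⟨by fun_prop, by rw [gaussianReal_map_sub_const, sub_self]⟩
  exact hsub.comp (measurePreserving_eval (fun i => gaussianReal (θ₀ i) 1) i)

lemma exists_lt_measure_closedBall {X : Type*} [PseudoMetricSpace X] [MeasurableSpace X]
    (μ : Measure X) (x : X) {ε : ℝ≥0∞} (hε : ε < μ univ) :
    ∃ K, ε < μ (Metric.closedBall x K) := by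
  have hmono : Monotone fun k : ℕ => Metric.closedBall x (k : ℝ) := fun a b hab =>
    Metric.closedBall_subset_closedBall (Nat.cast_le.2 hab)
  rw [← Metric.iUnion_closedBall_nat x, hmono.measure_iUnion, lt_iSup_iff] at hε
  obtain ⟨k, hk⟩ := hε
  exact ⟨k, hk⟩

lemma exists_forall_lt_Pdata_abs_sub_le {ε : ℝ≥0∞} (hε : ε < 1) :
    ∃ K : ℝ, ∀ {n : ℕ} (θ₀ : Fin n → ℝ) (i : Fin n), ε < Pdata θ₀ {y | |y i - θ₀ i| ≤ K} := by
  obtain ⟨K, hK⟩ :=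
    exists_lt_measure_closedBall (gaussianReal 0 1) 0 (hε.trans_eq measure_univ.symm)
  refine ⟨K, fun θ₀ i => ?_⟩
  rw [← (measurePreserving_eval_sub_Pdata θ₀ i).measure_preimage
    Metric.isClosed_closedBall.nullMeasurableSet] at hK
  simpa only [preimage, mem_closedBall_zero_iff, Real.norm_eq_abs] using hK

end Data

theorem stmt_1_general {ι : Type*} {l : Filter ι} {α kM L : ℝ} (hα : 0 < α) (hkM : kM < 1)
    (hL : 0 ≤ L) {τ : ι → ℝ} (hτ : Tendsto τ l (nhdsWithin 0 (Ioi 0))) {N : ι → ℕ}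
    {θ₀ : (n : ι) → Fin (N n) → ℝ} {i : (n : ι) → Fin (N n)}
    (hlow : Tendsto (fun n => |θ₀ n (i n)| / τ n) l atTop)
    (hupp : ∀ᶠ n in l, |θ₀ n (i n)| ≤ kM * zet (τ n)) {rhat : ι → ℝ → ℝ}
    (hrhat : ∀ n y, postProb (τ n) y {x | |x - postMean (τ n) y| ≤ rhat n y} ≤ 1 - α) :
    Tendsto
      (fun n =>
        Pdata (θ₀ n) {y | ¬ |θ₀ n (i n) - postMean (τ n) (y (i n))| ≤ L * rhat n (y (i n))})
      l (nhds 1) := by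
  refine tendsto_order.2 ⟨fun ε hε => ?_, fun _ h => .of_forall fun _ => prob_le_one.trans_lt h⟩
  obtain ⟨K, hK⟩ := exists_forall_lt_Pdata_abs_sub_le hε
  have hD : 0 < phiN 1 / (6 * (1 + L + L / α)) := div_pos (phiN_pos 1) (by positivity)
  filter_upwards [eventually_forall_mul_exp_sq_lt hτ hkM hlow hupp hD K,
    hτ.eventually (Ioc_mem_nhdsGT (by norm_num : (0 : ℝ) < 1 / 4))] with n hn hτn
  exact (hK (θ₀ n) (i n)).trans_le <| measure_mono fun y hy => not_le.2 <|
    mul_radius_lt_abs_sub_postMean hτn.1 hτn.2 hα hL (hrhat n _) (hn _ hy)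

theorem stmt_1
    (α : ℝ) (hα : 0 < α) (hα' : α ≤ 1 / 2)
    (kM : ℝ) (hkM : kM < 1)
    (τ : ℕ → ℝ) (hτpos : ∀ n, 0 < τ n) (hτ : Tendsto τ atTop (nhds 0))
    (f : ℕ → ℝ) (hf : Tendsto f atTop atTop)
    (θ₀ : (n : ℕ) → Fin (n + 1) → ℝ)
    (rhat : (n : ℕ) → ℝ → ℝ)
    (hrhat : ∀ n y, postProb (τ n) y {x | |x - postMean (τ n) y| ≤ rhat n y} = 1 - α)
    (L : ℝ) (hL : 0 < L)
    (i : (n : ℕ) → Fin (n + 1))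
    (hiM : ∀ n, f n * τ n ≤ |θ₀ n (i n)| ∧ |θ₀ n (i n)| ≤ kM * zet (τ n)) :
    Tendsto
      (fun n =>
        Pdata (θ₀ n)
          {y : Fin (n + 1) → ℝ |
            ¬ |θ₀ n (i n) - postMean (τ n) (y (i n))| ≤ L * rhat n (y (i n))})
      atTop (nhds 1) := by
  exact stmt_1_general hα hkM hL.le (tendsto_nhdsWithin_iff.2 ⟨hτ, .of_forall hτpos⟩)
    (tendsto_atTop_mono (fun n => (le_div_iff₀ (hτpos n)).2 (hiM n).1) hf)
    (.of_forall fun n => (hiM n).2) fun n y => (hrhat n y).le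

end
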